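/- For every instance I of the dynamic acknowledgment problem on [n] and every λ ∈ [0,1), there exists a feasible solution Y of I that is λ-stable, i.e., Δ(I,Y,t) ≤ 1−λ for all t ∈ [n], and that satisfies F(I,Y) ≤ (1/(1−λ))·opt(I). -/

import Mathlib

open Finset

/-- Waiting time from `t` until the first acknowledgment in `X` at or after `t` (`0` if none). -/
noncomputable def ackWait (X : Finset ℕ) (t : ℕ) : ℕ :=
  if h : (X.filter fun x => t ≤ x).Nonempty then (X.filter fun x => t ≤ x).min' h - t else 0

/-- Delay cost `D(I,X)` of solution `X` for the instance `p` on horizon `{a, …, b}`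
with delay parameter `d`. -/
noncomputable def delayCost (d : ℝ) (a b : ℕ) (p : ℕ → ℝ) (X : Finset ℕ) : ℝ :=
  (1 / d) * ∑ t ∈ Finset.Icc a b, p t * (ackWait X t : ℝ)

/-- Total cost `F(I,X) = |X| + D(I,X)`. -/
noncomputable def cost (d : ℝ) (a b : ℕ) (p : ℕ → ℝ) (X : Finset ℕ) : ℝ :=
  (X.card : ℝ) + delayCost d a b p X

/-- Feasibility of `X` for the instance `p` on horizon `{a,…,b}`: `X` is a nonempty subset of
the horizon and every time with positive demand has an acknowledgment at or after it. -/
def Feasible (a b : ℕ) (p : ℕ → ℝ) (X : Finset ℕ) : Prop :=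
  X.Nonempty ∧ X ⊆ Finset.Icc a b ∧ ∀ t ∈ Finset.Icc a b, 0 < p t → ∃ x ∈ X, t ≤ x

/-- Optimal cost `opt(I)` of the instance `p` on horizon `{a,…,b}`. -/
noncomputable def opt (d : ℝ) (a b : ℕ) (p : ℕ → ℝ) : ℝ :=
  sInf {c : ℝ | ∃ X : Finset ℕ, Feasible a b p X ∧ cost d a b p X = c}

/-- `Δ(I,Y,t) = D(I,Y) − D(I,Y ∪ {t})`. -/
noncomputable def delta (d : ℝ) (a b : ℕ) (p : ℕ → ℝ) (Y : Finset ℕ) (t : ℕ) : ℝ :=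
  delayCost d a b p Y - delayCost d a b p (insert t Y)

/-- Auxiliary error `τ([t1,t2], I, Î) = opt(O(I⟨t1,t2⟩,Î⟨t1,t2⟩)) − opt(U(I⟨t1,t2⟩,Î⟨t1,t2⟩))`. -/
noncomputable def auxErr (d : ℝ) (t1 t2 : ℕ) (p q : ℕ → ℝ) : ℝ :=
  opt d t1 t2 (fun t => max (p t) (q t)) - opt d t1 t2 (fun t => min (p t) (q t))

/-- for every instance on `[n]` and every `λ ∈ [0,1)`, there is a feasible
`λ`-stable solution `Y` (i.e. `Δ(I,Y,t) ≤ 1−λ` for all `t ∈ [n]`) with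
`F(I,Y) ≤ (1/(1−λ))·opt(I)`. -/
theorem exists_stable_approx_solution (d : ℝ) (hd : 0 < d) (n : ℕ) (hn : 1 ≤ n)
    (p : ℕ → ℝ) (hp : ∀ t, 0 ≤ p t)
    (lam : ℝ) (hlam0 : 0 ≤ lam) (hlam1 : lam < 1) :
    ∃ Y : Finset ℕ, Feasible 1 n p Y ∧
      (∀ t ∈ Finset.Icc 1 n, delta d 1 n p Y t ≤ 1 - lam) ∧
      cost d 1 n p Y ≤ (1 / (1 - lam)) * opt d 1 n p := by
  classical
  have hmu : 0 < 1 - lam := by linarith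
  have hD : ∀ X, 0 ≤ delayCost d 1 n p X := by
    intro X
    unfold delayCost
    exact mul_nonneg (by positivity)
      (Finset.sum_nonneg fun t _ => mul_nonneg (hp t) (Nat.cast_nonneg _))
  have hfn : Feasible 1 n p {n} := by
    refine ⟨Finset.singleton_nonempty n, ?_, ?_⟩
    · intro x hx
      rw [Finset.mem_singleton] at hx
      subst hx
      exact Finset.mem_Icc.2 ⟨hn, le_rfl⟩
    · intro t ht _
      exact ⟨n, Finset.mem_singleton_self n, (Finset.mem_Icc.1 ht).2⟩
  -- minimise `(1 - lam) |Y| + D(Y)` over the feasible solutions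
  obtain ⟨Y, hY, hmin⟩ := Finset.exists_min_image
    ((Finset.Icc 1 n).powerset.filter fun X => Feasible 1 n p X)
    (fun X => (1 - lam) * (X.card : ℝ) + delayCost d 1 n p X)
    ⟨{n}, Finset.mem_filter.2 ⟨Finset.mem_powerset.2 hfn.2.1, hfn⟩⟩
  have hYf : Feasible 1 n p Y := (Finset.mem_filter.1 hY).2
  have hmin' : ∀ X, Feasible 1 n p X →
      (1 - lam) * (Y.card : ℝ) + delayCost d 1 n p Y
        ≤ (1 - lam) * (X.card : ℝ) + delayCost d 1 n p X := fun X hX =>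
    hmin X (Finset.mem_filter.2 ⟨Finset.mem_powerset.2 hX.2.1, hX⟩)
  refine ⟨Y, hYf, ?_, ?_⟩
  · intro t ht
    have hf : Feasible 1 n p (insert t Y) := by
      refine ⟨Finset.insert_nonempty t Y, Finset.insert_subset ht hYf.2.1, ?_⟩
      intro s hs hps
      obtain ⟨x, hx, hsx⟩ := hYf.2.2 s hs hps
      exact ⟨x, Finset.mem_insert_of_mem hx, hsx⟩
    have h1 := hmin' _ hf
    have h2 : ((insert t Y).card : ℝ) ≤ (Y.card : ℝ) + 1 := by
      exact_mod_cast Finset.card_insert_le t Y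
    have h3 := mul_le_mul_of_nonneg_left h2 hmu.le
    have h4 : delta d 1 n p Y t
        = delayCost d 1 n p Y - delayCost d 1 n p (insert t Y) := by
      unfold delta
      congr!
    rw [h4]
    linarith
  · have key : (1 - lam) * cost d 1 n p Y ≤ opt d 1 n p := by
      unfold opt
      refine le_csInf ⟨_, {n}, hfn, rfl⟩ ?_
      rintro c ⟨X, hX, rfl⟩
      have h1 := hmin' X hX
      have h2 := mul_nonneg hlam0 (hD Y)
      have h3 := mul_nonneg hlam0 (Nat.cast_nonneg (α := ℝ) X.card)
      unfold cost
      linarith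
    rw [one_div, ← div_eq_inv_mul, le_div_iff₀ hmu]
    linarith
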